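/- arXiv:2601.07228 — 3 statements merged into one kernel-verified Lean document; each statement's English description precedes it below -/
import Mathlib

section
/- Let T_k denote the k-th Chebyshev polynomial of the first kind, and let [T_k]_j denote the coefficient of x^j in T_k(x). Then |[T_k]_0| ≤ 1 for every k ≥ 0, and for every k ≥ 1, max_{1 ≤ j ≤ k} |[T_k]_j| ≤ (1+√2)^k ≤ 3^k. -/
open Polynomial

/-!
The recurrence `T (n + 2) = 2 * X * T (n + 1) - T n` shows that a bound `r ^ n` on the coefficients
of `T n` propagates as soon as `2 * r + 1 ≤ r ^ 2`. The number `1 + √2` is the positive root of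
`r ^ 2 = 2 * r + 1`. The constant coefficient is the value at `0`, which is `0`, `1` or `-1`.
-/

section Recurrence

variable {R : Type*} [SeminormedRing R]

theorem norm_coeff_X_mul_le {p : R[X]} {B : ℝ} (hp : ∀ i, ‖p.coeff i‖ ≤ B) (j : ℕ) :
    ‖(X * p).coeff j‖ ≤ B := by
  cases j with
  | zero => simpa only [coeff_X_mul_zero, norm_zero] using (norm_nonneg _).trans (hp 0)
  | succ i => simpa only [coeff_X_mul] using hp i

theorem norm_coeff_le_mul_pow_of_recurrence {p : ℕ → R[X]} {a b : R} {K r : ℝ}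
    (hrec : ∀ n, p (n + 2) = C a * (X * p (n + 1)) + C b * p n)
    (hr : ‖a‖ * r + ‖b‖ ≤ r ^ 2)
    (h₀ : ∀ j, ‖(p 0).coeff j‖ ≤ K) (h₁ : ∀ j, ‖(p 1).coeff j‖ ≤ K * r) (n j : ℕ) :
    ‖(p n).coeff j‖ ≤ K * r ^ n := by
  induction n using Nat.twoStepInduction generalizing j with
  | zero => simpa only [pow_zero, mul_one] using h₀ j
  | one => simpa only [pow_one] using h₁ j
  | more n ih ih_succ =>
    have bound_nonneg : 0 ≤ K * r ^ n := (norm_nonneg _).trans (ih 0)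
    calc ‖(p (n + 2)).coeff j‖
        = ‖a * (X * p (n + 1)).coeff j + b * (p n).coeff j‖ := by
          rw [hrec, coeff_add, coeff_C_mul, coeff_C_mul]
      _ ≤ ‖a‖ * ‖(X * p (n + 1)).coeff j‖ + ‖b‖ * ‖(p n).coeff j‖ :=
          norm_add_le_of_le (norm_mul_le _ _) (norm_mul_le _ _)
      _ ≤ ‖a‖ * (K * r ^ (n + 1)) + ‖b‖ * (K * r ^ n) := by
          gcongr
          · exact norm_coeff_X_mul_le ih_succ j
          · exact ih j
      _ = (‖a‖ * r + ‖b‖) * (K * r ^ n) := by ring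
      _ ≤ r ^ 2 * (K * r ^ n) := by gcongr
      _ = K * r ^ (n + 2) := by ring

end Recurrence

section Chebyshev

variable (R : Type*) [SeminormedCommRing R] [NormOneClass R]

theorem norm_coeff_zero_chebyshev_T_le_one (n : ℤ) : ‖(Chebyshev.T R n).coeff 0‖ ≤ 1 := by
  rw [coeff_zero_eq_eval_zero, Chebyshev.T_eval_zero]
  split_ifs
  · rcases Int.units_eq_one_or (n / 2).negOnePow with h | h <;> simp [h]
  · simp

theorem norm_coeff_chebyshev_T_le_pow {r : ℝ} (hr₀ : 0 ≤ r) (hr : 2 * r + 1 ≤ r ^ 2)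
    (n : ℤ) (j : ℕ) : ‖(Chebyshev.T R n).coeff j‖ ≤ r ^ n.natAbs := by
  have one_le : 1 ≤ r := by nlinarith
  have hrec (m : ℕ) : Chebyshev.T R (m + 2 : ℕ) =
      C 2 * (X * Chebyshev.T R (m + 1 : ℕ)) + C (-1) * Chebyshev.T R m := by
    push_cast
    rw [Chebyshev.T_add_two, C_neg, C_1, C_ofNat]
    ring
  have norm_two_le : ‖(2 : R)‖ ≤ 2 := by simpa using Nat.norm_cast_le (α := R) 2
  have hr_norm : ‖(2 : R)‖ * r + ‖(-1 : R)‖ ≤ r ^ 2 := by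
    rw [norm_neg, norm_one]
    exact le_trans (by gcongr) hr
  have h₀ (i : ℕ) : ‖(Chebyshev.T R (0 : ℕ)).coeff i‖ ≤ 1 := by
    rw [Nat.cast_zero, Chebyshev.T_zero, coeff_one]
    split_ifs <;> simp
  have h₁ (i : ℕ) : ‖(Chebyshev.T R (1 : ℕ)).coeff i‖ ≤ 1 * r := by
    rw [Nat.cast_one, Chebyshev.T_one, coeff_X, one_mul]
    split_ifs
    · rwa [norm_one]
    · rwa [norm_zero]
  rw [← Chebyshev.T_natAbs, ← one_mul (r ^ n.natAbs)]
  exact norm_coeff_le_mul_pow_of_recurrence (p := fun m : ℕ ↦ Chebyshev.T R m)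
    hrec hr_norm h₀ h₁ n.natAbs j

theorem chebyshev_coeff_bound_general (n : ℤ) :
    ‖(Chebyshev.T R n).coeff 0‖ ≤ 1 ∧
    (∀ j : ℕ, ‖(Chebyshev.T R n).coeff j‖ ≤ (1 + √2) ^ n.natAbs) := by
  have root_eq : 2 * (1 + √2) + 1 = (1 + √2) ^ 2 := by
    linear_combination -Real.sq_sqrt (zero_le_two (α := ℝ))
  exact ⟨norm_coeff_zero_chebyshev_T_le_one R n,
    norm_coeff_chebyshev_T_le_pow R (by positivity) root_eq.le n⟩

end Chebyshev

theorem one_add_sqrt_two_le_three : 1 + √2 ≤ 3 := by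
  have sqrt_two_le_two : √2 ≤ 2 := Real.sqrt_le_iff.2 (by norm_num)
  linarith

/-- Coefficient bounds for Chebyshev polynomials of the first kind:
the constant coefficient of `T_k` is at most 1 in absolute value, and for `k ≥ 1`
every other coefficient of `T_k` is at most `(1+√2)^k ≤ 3^k` in absolute value. -/
theorem chebyshev_coeff_bound :
    (∀ k : ℕ, |(Polynomial.Chebyshev.T ℝ (k : ℤ)).coeff 0| ≤ 1) ∧
    (∀ k : ℕ, 1 ≤ k →
      (∀ j : ℕ, 1 ≤ j → j ≤ k →
        |(Polynomial.Chebyshev.T ℝ (k : ℤ)).coeff j| ≤ (1 + Real.sqrt 2) ^ k) ∧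
      (1 + Real.sqrt 2) ^ k ≤ (3 : ℝ) ^ k) :=
  ⟨fun k ↦ (chebyshev_coeff_bound_general ℝ k).1, fun k _ ↦
    ⟨fun j _ _ ↦ (chebyshev_coeff_bound_general ℝ k).2 j,
      pow_le_pow_left₀ (by positivity) one_add_sqrt_two_le_three k⟩⟩
end

section
/- Let B ≥ 3 and let f : [−B, B] → ℝ be a 1-Lipschitz function with f(0) = 0. Then for every m that is a positive multiple of 4, there exists a polynomial P(x) = ∑_{j=0}^m c_j x^j of degree at most m such that sup_{x ∈ [−B,B]} |f(x) − P(x)| ≤ 18B/m and |c_j| ≤ 6B · 3^{m−j} for all 0 ≤ j ≤ m. -/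
/-!
With `x = B cos θ` the function `f` becomes an even function of `θ` that varies by at most
`B |cos θ - cos φ| ≤ 2B |sin ((θ ± φ) / 2)|`. Average it over `N` equally spaced nodes against the
positive kernel `‖∑ₖ aₖ e^{ikt}‖²`, symmetrised so that the average is a polynomial in `cos θ`.
By Parseval on the nodes the kernel has total mass `N ∑ aₖ²`, while multiplying the exponential sum
by `1 - e^{it}` differences its coefficients. Cauchy–Schwarz therefore bounds the mean of
`2 |sin (t / 2)|`, and with it the error divided by `B`, by the ratio of the `ℓ²` norms of the
differences of `a` and of `a`. For the sine sequence `aₖ = sin ((k + 1) π / (m + 2))` this ratio is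
`2 sin (π / (2 (m + 2))) ≤ π / (m + 2)`. The coefficients are controlled by a Schur test, since
those of the Chebyshev polynomial `Tₚ` are at most `3 ^ |p|`.
-/

open Finset Polynomial
open scoped Real NNReal

section ExponentialSums

/-- The point `2πj / N`, the `j`-th of `N` equally spaced nodes on the circle. -/
noncomputable def circleNode (N j : ℕ) : ℝ := 2 * π * j / N

/-- The exponential sum `∑_{k < n} aₖ e^{ikt}`; its squared norm is the positive kernel of the
approximation. -/
noncomputable def expSum (a : ℕ → ℝ) (n : ℕ) (t : ℝ) : ℂ :=
  ∑ k ∈ range n, a k * Complex.exp (t * Complex.I) ^ k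

theorem re_expSum (a : ℕ → ℝ) (n : ℕ) (t : ℝ) :
    (expSum a n t).re = ∑ k ∈ range n, a k * Real.cos (k * t) := by
  simp only [expSum, Complex.re_sum, Complex.re_ofReal_mul, ← Complex.exp_nat_mul, ← mul_assoc]
  exact_mod_cast sum_congr rfl fun k _ => by rw [← Complex.exp_ofReal_mul_I_re]

theorem im_expSum (a : ℕ → ℝ) (n : ℕ) (t : ℝ) :
    (expSum a n t).im = ∑ k ∈ range n, a k * Real.sin (k * t) := by
  simp only [expSum, Complex.im_sum, Complex.im_ofReal_mul, ← Complex.exp_nat_mul, ← mul_assoc]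
  exact_mod_cast sum_congr rfl fun k _ => by rw [← Complex.exp_ofReal_mul_I_im]

theorem norm_expSum_sq (a : ℕ → ℝ) (n : ℕ) (t : ℝ) :
    ‖expSum a n t‖ ^ 2 =
      ∑ k ∈ range n, ∑ l ∈ range n, a k * a l * Real.cos (((k - l : ℤ) : ℝ) * t) := by
  rw [Complex.sq_norm, Complex.normSq_apply, re_expSum, im_expSum, sum_mul_sum, sum_mul_sum,
    ← sum_add_distrib]
  refine sum_congr rfl fun k _ => ?_
  rw [← sum_add_distrib]
  refine sum_congr rfl fun l _ => ?_
  push_cast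
  rw [sub_mul, Real.cos_sub]
  ring

theorem sum_exp_zpow_circleNode_eq_zero {N : ℕ} {p : ℤ} (hp : ¬(N : ℤ) ∣ p) :
    ∑ j ∈ range N, (Complex.exp (2 * π * Complex.I / N) ^ p) ^ j = 0 := by
  rcases eq_or_ne N 0 with rfl | hN
  · exact sum_range_zero _
  have hζ := Complex.isPrimitiveRoot_exp N hN
  set ζ := Complex.exp (2 * π * Complex.I / N)
  have hζp : ζ ^ p ≠ 1 := mt (hζ.zpow_eq_one_iff_dvd p).mp hp
  have hζN : (ζ ^ p) ^ N = 1 := by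
    rw [← zpow_natCast, ← zpow_mul, mul_comm, zpow_mul, zpow_natCast, hζ.pow_eq_one, one_zpow]
  rw [geom_sum_eq hζp, hζN, sub_self, zero_div]

theorem sum_cos_circleNode_eq_zero {N : ℕ} {p : ℤ} (hp : ¬(N : ℤ) ∣ p) (s : ℝ) :
    ∑ j ∈ range N, Real.cos (p * (s + circleNode N j)) = 0 := by
  have cos_eq : ∀ j ∈ range N, Real.cos (p * (s + circleNode N j)) =
      (Complex.exp (p * s * Complex.I) *
        (Complex.exp (2 * π * Complex.I / N) ^ p) ^ j).re := by
    intro j _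
    rw [← Complex.exp_int_mul, ← Complex.exp_nat_mul, ← Complex.exp_add,
      ← Complex.exp_ofReal_mul_I_re, circleNode]
    congr 2
    push_cast
    ring
  rw [sum_congr rfl cos_eq, ← Complex.re_sum, ← mul_sum, sum_exp_zpow_circleNode_eq_zero hp,
    mul_zero, Complex.zero_re]

theorem sum_norm_expSum_sq (a : ℕ → ℝ) {n N : ℕ} (hnN : n ≤ N) (s : ℝ) :
    ∑ j ∈ range N, ‖expSum a n (s + circleNode N j)‖ ^ 2 = N * ∑ k ∈ range n, a k ^ 2 := by
  simp_rw [norm_expSum_sq]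
  rw [sum_comm, mul_sum]
  refine sum_congr rfl fun k hk => ?_
  rw [sum_comm, sum_eq_single_of_mem k hk]
  · simp only [sub_self, Int.cast_zero, zero_mul, Real.cos_zero, sum_const, card_range,
      nsmul_eq_mul]
    ring
  · intro l hl hlk
    have hkN : k < N := (mem_range.mp hk).trans_le hnN
    have hlN : l < N := (mem_range.mp hl).trans_le hnN
    have not_dvd : ¬(N : ℤ) ∣ (k - l : ℤ) := fun h =>
      absurd (Int.eq_zero_of_abs_lt_dvd h (by rw [abs_lt]; omega)) (by omega)
    rw [← mul_sum, sum_cos_circleNode_eq_zero not_dvd, mul_zero]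

theorem sum_sub_mul_pow_eq {R : Type*} [CommRing R] (b : ℕ → R) (n : ℕ) (hb0 : b 0 = 0)
    (hbn : b (n + 1) = 0) (z : R) :
    ∑ k ∈ range (n + 1), (b (k + 1) - b k) * z ^ k =
      (1 - z) * ∑ k ∈ range n, b (k + 1) * z ^ k := by
  have shift : ∑ k ∈ range (n + 1), b k * z ^ k = z * ∑ k ∈ range n, b (k + 1) * z ^ k := by
    rw [sum_range_succ', hb0, zero_mul, add_zero, mul_sum]
    exact sum_congr rfl fun k _ => by ring
  simp_rw [sub_mul]
  rw [sum_sub_distrib, shift, sum_range_succ, hbn]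
  ring

theorem norm_expSum_sub (b : ℕ → ℝ) (n : ℕ) (hb0 : b 0 = 0) (hbn : b (n + 1) = 0) (t : ℝ) :
    ‖expSum (fun k => b (k + 1) - b k) (n + 1) t‖ =
      |2 * Real.sin (t / 2)| * ‖expSum (fun k => b (k + 1)) n t‖ := by
  have factor := sum_sub_mul_pow_eq (fun k => (b k : ℂ)) n (by exact_mod_cast hb0)
    (by exact_mod_cast hbn) (Complex.exp (t * Complex.I))
  simp only [expSum, Complex.ofReal_sub]
  rw [factor, norm_mul, norm_sub_rev, mul_comm (t : ℂ), Complex.norm_exp_I_mul_ofReal_sub_one,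
    Real.norm_eq_abs]

theorem sum_abs_sin_mul_norm_expSum_sq_le (b : ℕ → ℝ) {n N : ℕ} (hb0 : b 0 = 0)
    (hbn : b (n + 1) = 0) (hnN : n + 1 ≤ N) {δ : ℝ} (hδ : 0 ≤ δ)
    (hb : ∑ k ∈ range (n + 1), (b (k + 1) - b k) ^ 2 ≤ δ ^ 2 * ∑ k ∈ range n, b (k + 1) ^ 2)
    (s : ℝ) :
    ∑ j ∈ range N, |2 * Real.sin ((s + circleNode N j) / 2)| *
        ‖expSum (fun k => b (k + 1)) n (s + circleNode N j)‖ ^ 2 ≤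
      δ * (N * ∑ k ∈ range n, b (k + 1) ^ 2) := by
  set S := ∑ k ∈ range n, b (k + 1) ^ 2
  have hNS : 0 ≤ N * S := mul_nonneg N.cast_nonneg (sum_nonneg fun _ _ => sq_nonneg _)
  let K : ℕ → ℝ := fun j => ‖expSum (fun k => b (k + 1)) n (s + circleNode N j)‖
  let D : ℕ → ℝ := fun j => ‖expSum (fun k => b (k + 1) - b k) (n + 1) (s + circleNode N j)‖
  have weighted_eq : ∀ j, |2 * Real.sin ((s + circleNode N j) / 2)| * K j ^ 2 = D j * K j := by
    intro j
    simp only [K, D, norm_expSum_sub b n hb0 hbn]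
    ring
  have sum_K : ∑ j ∈ range N, K j ^ 2 = N * S := sum_norm_expSum_sq _ (by omega) s
  have sum_D : ∑ j ∈ range N, D j ^ 2 ≤ δ ^ 2 * (N * S) := by
    rw [sum_norm_expSum_sq _ hnN s, mul_left_comm]
    gcongr
  have cauchy_schwarz : (∑ j ∈ range N, D j * K j) ^ 2 ≤ (δ * (N * S)) ^ 2 :=
    calc (∑ j ∈ range N, D j * K j) ^ 2
        ≤ (∑ j ∈ range N, D j ^ 2) * ∑ j ∈ range N, K j ^ 2 := sum_mul_sq_le_sq_mul_sq _ _ _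
      _ ≤ δ ^ 2 * (N * S) * (N * S) := by
        rw [sum_K]
        exact mul_le_mul_of_nonneg_right sum_D hNS
      _ = (δ * (N * S)) ^ 2 := by ring
  calc ∑ j ∈ range N, |2 * Real.sin ((s + circleNode N j) / 2)| * K j ^ 2
      = ∑ j ∈ range N, D j * K j := sum_congr rfl fun j _ => weighted_eq j
    _ ≤ δ * (N * S) := (abs_le_of_sq_le_sq' cauchy_schwarz (mul_nonneg hδ hNS)).2

end ExponentialSums

section CoefficientBounds

theorem abs_coeff_chebyshev_T_natCast_le (p i : ℕ) : |(Chebyshev.T ℝ p).coeff i| ≤ 3 ^ p := by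
  induction p using Nat.twoStepInduction generalizing i with
  | zero => simp only [Nat.cast_zero, Chebyshev.T_zero, coeff_one]; split_ifs <;> simp
  | one => simp only [Nat.cast_one, Chebyshev.T_one, coeff_X]; split_ifs <;> simp
  | more p ih₀ ih₁ =>
    have shifted : |(X * Chebyshev.T ℝ (p + 1 : ℕ)).coeff i| ≤ 3 ^ (p + 1) := by
      cases i with
      | zero => simp
      | succ i => rw [coeff_X_mul]; exact ih₁ i
    have recurrence : (Chebyshev.T ℝ (p + 2 : ℕ)).coeff i =
        2 * (X * Chebyshev.T ℝ (p + 1 : ℕ)).coeff i - (Chebyshev.T ℝ p).coeff i := by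
      push_cast
      rw [Chebyshev.T_add_two, coeff_sub, mul_assoc, coeff_ofNat_mul]
    calc |(Chebyshev.T ℝ (p + 2 : ℕ)).coeff i|
        ≤ 2 * |(X * Chebyshev.T ℝ (p + 1 : ℕ)).coeff i| + |(Chebyshev.T ℝ p).coeff i| := by
          rw [recurrence]
          exact (abs_sub _ _).trans_eq (by rw [abs_mul, abs_two])
      _ ≤ 2 * 3 ^ (p + 1) + 3 ^ p := by gcongr; exact ih₀ i
      _ ≤ 3 ^ (p + 2) := by rw [pow_add, pow_add]; linarith [pow_pos (three_pos (α := ℝ)) p]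

theorem abs_coeff_chebyshev_T_le (p : ℤ) (i : ℕ) :
    |(Chebyshev.T ℝ p).coeff i| ≤ 3 ^ p.natAbs := by
  rw [← Chebyshev.T_natAbs]
  exact abs_coeff_chebyshev_T_natCast_le _ _

theorem sum_three_pow_natAbs_sub_le {k n : ℕ} (hk : k < n) :
    ∑ l ∈ range n, (3 : ℝ) ^ (k - l : ℤ).natAbs ≤ 3 ^ n := by
  have term_le : ∀ l ∈ range n, (3 : ℝ) ^ (k - l : ℤ).natAbs ≤ 3 ^ l + 3 ^ (n - 1 - l) := by
    intro l _
    rcases le_total k l with hkl | hlk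
    · exact (pow_le_pow_right₀ (by norm_num) (by omega)).trans
        (le_add_of_nonneg_right (by positivity))
    · exact (pow_le_pow_right₀ (by norm_num) (by omega)).trans
        (le_add_of_nonneg_left (by positivity))
  calc ∑ l ∈ range n, (3 : ℝ) ^ (k - l : ℤ).natAbs
      ≤ ∑ l ∈ range n, ((3 : ℝ) ^ l + 3 ^ (n - 1 - l)) := sum_le_sum term_le
    _ = (∑ l ∈ range n, (3 : ℝ) ^ l) * (3 - 1) := by
        rw [sum_add_distrib, sum_range_reflect (fun l => (3 : ℝ) ^ l)]; ring
    _ = 3 ^ n - 1 := geom_sum_mul 3 n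
    _ ≤ 3 ^ n := sub_le_self _ zero_le_one

theorem sum_sum_abs_mul_le_of_row_sum_le {ι : Type*} (s : Finset ι) (w : ι → ι → ℝ)
    (hw : ∀ k l, 0 ≤ w k l) (hsymm : ∀ k l, w k l = w l k) {C : ℝ}
    (hrow : ∀ k ∈ s, ∑ l ∈ s, w k l ≤ C) (a : ι → ℝ) :
    ∑ k ∈ s, ∑ l ∈ s, |a k * a l| * w k l ≤ C * ∑ k ∈ s, a k ^ 2 := by
  have row_le : ∑ k ∈ s, ∑ l ∈ s, a k ^ 2 * w k l ≤ C * ∑ k ∈ s, a k ^ 2 := by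
    rw [mul_sum]
    refine sum_le_sum fun k hk => ?_
    rw [← mul_sum, mul_comm C]
    exact mul_le_mul_of_nonneg_left (hrow k hk) (sq_nonneg _)
  have col_eq : ∑ k ∈ s, ∑ l ∈ s, a l ^ 2 * w k l = ∑ k ∈ s, ∑ l ∈ s, a k ^ 2 * w k l := by
    rw [sum_comm]
    exact sum_congr rfl fun k _ => sum_congr rfl fun l _ => by rw [hsymm]
  have term_le : ∀ k l, |a k * a l| * w k l ≤ (a k ^ 2 * w k l + a l ^ 2 * w k l) / 2 := by
    intro k l
    have am_gm : |a k * a l| ≤ (a k ^ 2 + a l ^ 2) / 2 := by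
      rw [abs_mul, ← sq_abs (a k), ← sq_abs (a l)]
      linarith [two_mul_le_add_sq |a k| |a l|]
    linarith [mul_le_mul_of_nonneg_right am_gm (hw k l)]
  calc ∑ k ∈ s, ∑ l ∈ s, |a k * a l| * w k l
      ≤ ∑ k ∈ s, ∑ l ∈ s, (a k ^ 2 * w k l + a l ^ 2 * w k l) / 2 :=
        sum_le_sum fun k _ => sum_le_sum fun l _ => term_le k l
    _ = ∑ k ∈ s, ∑ l ∈ s, a k ^ 2 * w k l := by
        simp_rw [← sum_div, sum_add_distrib]
        rw [col_eq, add_self_div_two]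
    _ ≤ C * ∑ k ∈ s, a k ^ 2 := row_le

end CoefficientBounds

section KernelPolynomial

/-- The polynomial in `cos θ` obtained by averaging the kernel `‖expSum a n‖ ^ 2` over the two
arguments `θ + φ` and `-θ + φ`. -/
noncomputable def kernelPoly (a : ℕ → ℝ) (n : ℕ) (φ : ℝ) : ℝ[X] :=
  ∑ k ∈ range n, ∑ l ∈ range n,
    C (a k * a l * Real.cos (((k - l : ℤ) : ℝ) * φ)) * Chebyshev.T ℝ (k - l)

theorem eval_kernelPoly_cos (a : ℕ → ℝ) (n : ℕ) (φ θ : ℝ) :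
    (kernelPoly a n φ).eval (Real.cos θ) =
      (‖expSum a n (θ + φ)‖ ^ 2 + ‖expSum a n (-θ + φ)‖ ^ 2) / 2 := by
  simp only [kernelPoly, eval_finsetSum, eval_mul, eval_C, Chebyshev.T_real_cos, norm_expSum_sq,
    ← sum_add_distrib, sum_div]
  refine sum_congr rfl fun k _ => sum_congr rfl fun l _ => ?_
  rw [mul_add _ θ, mul_add _ (-θ), Real.cos_add, Real.cos_add, mul_neg, Real.cos_neg,
    Real.sin_neg]
  ring

theorem eval_kernelPoly_cos_nonneg (a : ℕ → ℝ) (n : ℕ) (φ θ : ℝ) :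
    0 ≤ (kernelPoly a n φ).eval (Real.cos θ) := by
  rw [eval_kernelPoly_cos]
  positivity

theorem natDegree_kernelPoly_le (a : ℕ → ℝ) (m : ℕ) (φ : ℝ) :
    (kernelPoly a (m + 1) φ).natDegree ≤ m := by
  refine natDegree_sum_le_of_forall_le _ _ fun k hk =>
    natDegree_sum_le_of_forall_le _ _ fun l hl => (natDegree_C_mul_le _ _).trans ?_
  rw [Chebyshev.natDegree_T]
  rw [mem_range] at hk hl
  omega

theorem abs_coeff_kernelPoly_le (a : ℕ → ℝ) (n : ℕ) (φ : ℝ) (i : ℕ) :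
    |(kernelPoly a n φ).coeff i| ≤ 3 ^ n * ∑ k ∈ range n, a k ^ 2 := by
  have term_le : ∀ k l : ℕ,
      |(C (a k * a l * Real.cos (((k - l : ℤ) : ℝ) * φ)) * Chebyshev.T ℝ (k - l)).coeff i| ≤
        |a k * a l| * 3 ^ (k - l : ℤ).natAbs := by
    intro k l
    rw [coeff_C_mul, abs_mul, abs_mul]
    exact mul_le_mul (mul_le_of_le_one_right (abs_nonneg _) (Real.abs_cos_le_one _))
      (abs_coeff_chebyshev_T_le _ _) (abs_nonneg _) (abs_nonneg _)
  calc |(kernelPoly a n φ).coeff i|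
      ≤ ∑ k ∈ range n, ∑ l ∈ range n, |a k * a l| * 3 ^ (k - l : ℤ).natAbs := by
        simp only [kernelPoly, finsetSum_coeff]
        exact (abs_sum_le_sum_abs _ _).trans <| sum_le_sum fun k _ =>
          (abs_sum_le_sum_abs _ _).trans <| sum_le_sum fun l _ => term_le k l
    _ ≤ 3 ^ n * ∑ k ∈ range n, a k ^ 2 :=
        sum_sum_abs_mul_le_of_row_sum_le _ (fun k l : ℕ => (3 : ℝ) ^ (k - l : ℤ).natAbs)
          (fun _ _ => by positivity) (fun _ _ => by rw [← Int.natAbs_neg, neg_sub])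
          (fun _ hk => sum_three_pow_natAbs_sub_le (mem_range.mp hk)) a

theorem sum_eval_kernelPoly_cos (a : ℕ → ℝ) {n N : ℕ} (hnN : n ≤ N) (θ : ℝ) :
    ∑ j ∈ range N, (kernelPoly a n (circleNode N j)).eval (Real.cos θ) =
      N * ∑ k ∈ range n, a k ^ 2 := by
  simp_rw [eval_kernelPoly_cos]
  rw [← sum_div, sum_add_distrib, sum_norm_expSum_sq a hnN, sum_norm_expSum_sq a hnN,
    add_self_div_two]

theorem abs_cos_sub_cos_le (θ φ : ℝ) :
    |Real.cos θ - Real.cos φ| ≤ |2 * Real.sin ((θ + φ) / 2)| := by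
  rw [Real.cos_sub_cos, abs_mul, neg_mul, abs_neg]
  exact mul_le_of_le_one_right (abs_nonneg _) (Real.abs_sin_le_one _)

theorem sum_abs_cos_sub_mul_eval_kernelPoly_le (b : ℕ → ℝ) {n N : ℕ} (hb0 : b 0 = 0)
    (hbn : b (n + 1) = 0) (hnN : n + 1 ≤ N) {δ : ℝ} (hδ : 0 ≤ δ)
    (hb : ∑ k ∈ range (n + 1), (b (k + 1) - b k) ^ 2 ≤ δ ^ 2 * ∑ k ∈ range n, b (k + 1) ^ 2)
    (θ : ℝ) :
    ∑ j ∈ range N, |Real.cos θ - Real.cos (circleNode N j)| *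
        (kernelPoly (fun k => b (k + 1)) n (circleNode N j)).eval (Real.cos θ) ≤
      δ * (N * ∑ k ∈ range n, b (k + 1) ^ 2) := by
  let K : ℝ → ℝ := fun t => ‖expSum (fun k => b (k + 1)) n t‖ ^ 2
  have term_le : ∀ φ, |Real.cos θ - Real.cos φ| * ((K (θ + φ) + K (-θ + φ)) / 2) ≤
      (|2 * Real.sin ((θ + φ) / 2)| * K (θ + φ) +
        |2 * Real.sin ((-θ + φ) / 2)| * K (-θ + φ)) / 2 := by
    intro φ
    have h₁ := mul_le_mul_of_nonneg_right (abs_cos_sub_cos_le θ φ) (sq_nonneg _ : 0 ≤ K (θ + φ))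
    have h₂ := mul_le_mul_of_nonneg_right (abs_cos_sub_cos_le (-θ) φ)
      (sq_nonneg _ : 0 ≤ K (-θ + φ))
    rw [Real.cos_neg] at h₂
    linarith
  have moment_le := sum_abs_sin_mul_norm_expSum_sq_le b hb0 hbn hnN hδ hb
  simp_rw [eval_kernelPoly_cos]
  refine (sum_le_sum fun j _ => term_le (circleNode N j)).trans ?_
  rw [← sum_div, sum_add_distrib]
  linarith [moment_le θ, moment_le (-θ)]

end KernelPolynomial

section JacksonPolynomial

/-- The polynomial in `cos θ` averaging `f ∘ cos` over `N` equally spaced nodes with weights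
`kernelPoly a n`, divided by `N ∑_{k < n} aₖ²`. This is the total mass of the weights if `n ≤ N`;
where it vanishes, so does the polynomial. -/
noncomputable def jacksonPoly (a : ℕ → ℝ) (n N : ℕ) (f : ℝ → ℝ) : ℝ[X] :=
  C (N * ∑ k ∈ range n, a k ^ 2)⁻¹ *
    ∑ j ∈ range N, C (f (Real.cos (circleNode N j))) * kernelPoly a n (circleNode N j)

theorem natDegree_jacksonPoly_le (a : ℕ → ℝ) (m N : ℕ) (f : ℝ → ℝ) :
    (jacksonPoly a (m + 1) N f).natDegree ≤ m :=
  (natDegree_C_mul_le _ _).trans <| natDegree_sum_le_of_forall_le _ _ fun _ _ =>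
    (natDegree_C_mul_le _ _).trans (natDegree_kernelPoly_le _ _ _)

theorem abs_coeff_jacksonPoly_le (a : ℕ → ℝ) (n N : ℕ) {f : ℝ → ℝ} {A : ℝ}
    (hf : ∀ x ∈ Set.Icc (-1) 1, |f x| ≤ A) (i : ℕ) :
    |(jacksonPoly a n N f).coeff i| ≤ A * 3 ^ n := by
  set S := ∑ k ∈ range n, a k ^ 2
  have hNS : 0 ≤ (N * S)⁻¹ :=
    inv_nonneg.mpr (mul_nonneg N.cast_nonneg (sum_nonneg fun _ _ => sq_nonneg _))
  have hA : 0 ≤ A := (abs_nonneg _).trans (hf 0 (by simp))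
  have term_le : ∀ j ∈ range N,
      |(C (f (Real.cos (circleNode N j))) * kernelPoly a n (circleNode N j)).coeff i| ≤
        A * (3 ^ n * S) := by
    intro j _
    rw [coeff_C_mul, abs_mul]
    exact mul_le_mul (hf _ (Real.cos_mem_Icc _)) (abs_coeff_kernelPoly_le _ _ _ _)
      (abs_nonneg _) hA
  calc |(jacksonPoly a n N f).coeff i|
      ≤ (N * S)⁻¹ * ∑ _j ∈ range N, A * (3 ^ n * S) := by
        rw [jacksonPoly, coeff_C_mul, finsetSum_coeff, abs_mul, abs_of_nonneg hNS]
        exact mul_le_mul_of_nonneg_left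
          ((abs_sum_le_sum_abs _ _).trans (sum_le_sum term_le)) hNS
    _ = (N * S)⁻¹ * (N * S) * (A * 3 ^ n) := by
        rw [sum_const, card_range, nsmul_eq_mul]; ring
    _ ≤ A * 3 ^ n := mul_le_of_le_one_left (by positivity) inv_mul_le_one

theorem sub_eval_jacksonPoly_cos (a : ℕ → ℝ) {n N : ℕ} (hnN : n ≤ N)
    (hmass : N * ∑ k ∈ range n, a k ^ 2 ≠ 0) (f : ℝ → ℝ) (θ : ℝ) :
    f (Real.cos θ) - (jacksonPoly a n N f).eval (Real.cos θ) =
      (∑ j ∈ range N, (f (Real.cos θ) - f (Real.cos (circleNode N j))) *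
        (kernelPoly a n (circleNode N j)).eval (Real.cos θ)) / (N * ∑ k ∈ range n, a k ^ 2) := by
  simp only [jacksonPoly, eval_mul, eval_C, eval_finsetSum, sub_mul, sum_sub_distrib, ← mul_sum]
  rw [sum_eval_kernelPoly_cos a hnN, sub_div, mul_div_cancel_right₀ _ hmass, inv_mul_eq_div]

theorem abs_sub_eval_jacksonPoly_cos_le (b : ℕ → ℝ) {n N : ℕ} (hb0 : b 0 = 0)
    (hbn : b (n + 1) = 0) (hnN : n + 1 ≤ N) {δ : ℝ} (hδ : 0 ≤ δ)
    (hb : ∑ k ∈ range (n + 1), (b (k + 1) - b k) ^ 2 ≤ δ ^ 2 * ∑ k ∈ range n, b (k + 1) ^ 2)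
    (hpos : 0 < ∑ k ∈ range n, b (k + 1) ^ 2) {f : ℝ → ℝ} {K : ℝ≥0}
    (hf : LipschitzOnWith K f (Set.Icc (-1) 1)) (θ : ℝ) :
    |f (Real.cos θ) - (jacksonPoly (fun k => b (k + 1)) n N f).eval (Real.cos θ)| ≤ K * δ := by
  set S := ∑ k ∈ range n, b (k + 1) ^ 2
  have hNS : 0 < N * S := mul_pos (Nat.cast_pos.mpr (by omega)) hpos
  let W : ℕ → ℝ := fun j =>
    (kernelPoly (fun k => b (k + 1)) n (circleNode N j)).eval (Real.cos θ)
  let x : ℕ → ℝ := fun j => Real.cos (circleNode N j)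
  have term_le : ∀ j ∈ range N, |(f (Real.cos θ) - f (x j)) * W j| ≤
      K * (|Real.cos θ - x j| * W j) := by
    intro j _
    rw [abs_mul, abs_of_nonneg (eval_kernelPoly_cos_nonneg _ _ _ _), ← mul_assoc]
    exact mul_le_mul_of_nonneg_right
      (hf.dist_le_mul _ (Real.cos_mem_Icc _) _ (Real.cos_mem_Icc _))
      (eval_kernelPoly_cos_nonneg _ _ _ _)
  rw [sub_eval_jacksonPoly_cos _ (by omega) hNS.ne', abs_div, abs_of_pos hNS, div_le_iff₀ hNS]
  calc |∑ j ∈ range N, (f (Real.cos θ) - f (x j)) * W j|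
      ≤ K * ∑ j ∈ range N, |Real.cos θ - x j| * W j := by
        rw [mul_sum]
        exact (abs_sum_le_sum_abs _ _).trans (sum_le_sum term_le)
    _ ≤ K * (δ * (N * S)) := by
        gcongr
        exact sum_abs_cos_sub_mul_eval_kernelPoly_le b hb0 hbn hnN hδ hb θ
    _ = K * δ * (N * S) := (mul_assoc _ _ _).symm

end JacksonPolynomial

section SineSequence

theorem sum_sq_sin_sub_sin (h : ℝ) (n : ℕ) :
    ∑ k ∈ range n, (Real.sin ((k + 1 : ℕ) * h) - Real.sin (k * h)) ^ 2 =
      (1 - Real.cos h) * (∑ k ∈ range n, Real.sin ((k + 1 : ℕ) * h) ^ 2 +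
        ∑ k ∈ range n, Real.sin (k * h) ^ 2) +
      Real.sin h * Real.sin (n * h) * Real.cos (n * h) := by
  induction n with
  | zero => simp
  | succ n ih =>
    rw [sum_range_succ, ih, sum_range_succ, sum_range_succ]
    push_cast
    rw [add_one_mul, Real.sin_add, Real.cos_add]
    linear_combination (Real.sin (n * h) * Real.cos h + Real.cos (n * h) * Real.sin h) *
      Real.sin (n * h) * Real.sin_sq_add_cos_sq h

theorem sin_succ_mul_pi_div_succ (n : ℕ) : Real.sin ((n + 1 : ℕ) * (π / (n + 1))) = 0 := by
  rw [Nat.cast_succ, mul_div_cancel₀ _ (by positivity), Real.sin_pi]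

theorem sum_sq_sin_sub_sin_le (n : ℕ) :
    ∑ k ∈ range (n + 1),
        (Real.sin ((k + 1 : ℕ) * (π / (n + 1))) - Real.sin (k * (π / (n + 1)))) ^ 2 ≤
      (π / (n + 1)) ^ 2 * ∑ k ∈ range n, Real.sin ((k + 1 : ℕ) * (π / (n + 1))) ^ 2 := by
  have sin_end := sin_succ_mul_pi_div_succ n
  set h := π / (n + 1)
  have one_sub_cos_le : 2 * (1 - Real.cos h) ≤ h ^ 2 := by
    linarith [Real.one_sub_sq_div_two_le_cos (x := h)]
  calc ∑ k ∈ range (n + 1), (Real.sin ((k + 1 : ℕ) * h) - Real.sin (k * h)) ^ 2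
      = 2 * (1 - Real.cos h) * ∑ k ∈ range n, Real.sin ((k + 1 : ℕ) * h) ^ 2 := by
        rw [sum_sq_sin_sub_sin, sin_end, sum_range_succ, sin_end, sum_range_succ']
        simp only [Nat.cast_zero, zero_mul, Real.sin_zero]
        ring
    _ ≤ h ^ 2 * ∑ k ∈ range n, Real.sin ((k + 1 : ℕ) * h) ^ 2 :=
        mul_le_mul_of_nonneg_right one_sub_cos_le (sum_nonneg fun _ _ => sq_nonneg _)

theorem sum_sq_sin_pos {n : ℕ} (hn : n ≠ 0) :
    0 < ∑ k ∈ range n, Real.sin ((k + 1 : ℕ) * (π / (n + 1))) ^ 2 := by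
  refine sum_pos (fun k hk => ?_) (nonempty_range_iff.mpr hn)
  have hkn : ((k + 1 : ℕ) : ℝ) < n + 1 := by exact_mod_cast Nat.succ_lt_succ (mem_range.mp hk)
  have lt_pi : (k + 1 : ℕ) * (π / (n + 1)) < π := by
    rw [← mul_div_assoc, div_lt_iff₀ (by positivity), mul_comm]
    exact mul_lt_mul_of_pos_left hkn Real.pi_pos
  exact pow_pos (Real.sin_pos_of_pos_of_lt_pi (by positivity) lt_pi) 2

end SineSequence

theorem exists_polynomial_near_of_lipschitzOnWith_Icc_neg_one_one {f : ℝ → ℝ} {K : ℝ≥0}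
    (hf : LipschitzOnWith K f (Set.Icc (-1) 1)) {A : ℝ} (hA : ∀ x ∈ Set.Icc (-1) 1, |f x| ≤ A)
    (m : ℕ) :
    ∃ P : ℝ[X], P.natDegree ≤ m ∧
      (∀ x ∈ Set.Icc (-1) 1, |f x - P.eval x| ≤ K * (π / (m + 2))) ∧
      ∀ j, |P.coeff j| ≤ A * 3 ^ (m + 1) := by
  let h : ℝ := π / ((m + 1 : ℕ) + 1)
  let b : ℕ → ℝ := fun k => Real.sin (k * h)
  have hb0 : b 0 = 0 := by simp [b]
  have hb_end : b (m + 1 + 1) = 0 := sin_succ_mul_pi_div_succ (m + 1)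
  have hh : h = π / (m + 2) := by
    simp only [h]
    push_cast
    ring
  refine ⟨jacksonPoly (fun k => b (k + 1)) (m + 1) (m + 2) f, natDegree_jacksonPoly_le _ _ _ _,
    fun x hx => ?_, abs_coeff_jacksonPoly_le _ _ _ hA⟩
  rw [← Real.cos_arccos hx.1 hx.2, ← hh]
  exact abs_sub_eval_jacksonPoly_cos_le b hb0 hb_end le_rfl (by positivity)
    (sum_sq_sin_sub_sin_le (m + 1)) (sum_sq_sin_pos m.succ_ne_zero) hf _

theorem mul_pi_div_add_two_le {B : ℝ} (hB : 0 ≤ B) {m : ℕ} (hm : 0 < m) :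
    B * (π / (m + 2)) ≤ 18 * B / m := by
  rw [mul_comm 18, mul_div_assoc]
  exact mul_le_mul_of_nonneg_left (div_le_div₀ (by norm_num) (by linarith [Real.pi_le_four])
    (by exact_mod_cast hm) (by linarith)) hB

theorem mul_three_pow_succ_div_pow_le {B : ℝ} (hB : 3 ≤ B) {j m : ℕ} (hj : j ≤ m) :
    B * 3 ^ (m + 1) / B ^ j ≤ 6 * B * 3 ^ (m - j) := by
  rw [div_le_iff₀ (by positivity)]
  calc B * 3 ^ (m + 1) = 3 * B * 3 ^ (m - j) * 3 ^ j := by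
        rw [mul_assoc, ← pow_add, Nat.sub_add_cancel hj, pow_succ']; ring
    _ ≤ 6 * B * 3 ^ (m - j) * B ^ j := by gcongr; norm_num

theorem chebyshev_jackson_approx_general {B : ℝ} (hB : 0 < B) {f : ℝ → ℝ} {K : ℝ≥0}
    (hf : LipschitzOnWith K f (Set.Icc (-B) B)) (hf0 : f 0 = 0) (m : ℕ) :
    ∃ P : ℝ[X], P.natDegree ≤ m ∧
      (∀ x ∈ Set.Icc (-B) B, |f x - P.eval x| ≤ K * B * (π / (m + 2))) ∧
      ∀ j, |P.coeff j| ≤ K * B * 3 ^ (m + 1) / B ^ j := by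
  have scaled_mem : Set.MapsTo (B * ·) (Set.Icc (-1) 1) (Set.Icc (-B) B) := fun y hy =>
    ⟨by nlinarith [hy.1], by nlinarith [hy.2]⟩
  have scaled_lipschitz : LipschitzOnWith (K * B.toNNReal) (fun y => f (B * y))
      (Set.Icc (-1) 1) := by
    refine hf.comp (LipschitzWith.lipschitzOnWith ?_) scaled_mem
    refine LipschitzWith.of_dist_le_mul fun x y => ?_
    rw [Real.dist_eq, Real.dist_eq, ← mul_sub, abs_mul, abs_of_pos hB, Real.coe_toNNReal _ hB.le]
  have scaled_bound : ∀ y ∈ Set.Icc (-1) 1, |f (B * y)| ≤ K * B := by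
    intro y hy
    have dist_le := scaled_lipschitz.dist_le_mul y hy 0 (by simp)
    rw [mul_zero, hf0, Real.dist_0_eq_abs, Real.dist_0_eq_abs, NNReal.coe_mul,
      Real.coe_toNNReal _ hB.le] at dist_le
    exact dist_le.trans (mul_le_of_le_one_right (by positivity) (abs_le.mpr hy))
  obtain ⟨Q, hQ_deg, hQ_near, hQ_coeff⟩ :=
    exists_polynomial_near_of_lipschitzOnWith_Icc_neg_one_one scaled_lipschitz scaled_bound m
  refine ⟨Q.comp (C B⁻¹ * X), ?_, fun x hx => ?_, fun j => ?_⟩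
  · exact natDegree_comp_le.trans <|
      (Nat.mul_le_mul hQ_deg ((natDegree_C_mul_le _ _).trans natDegree_X_le)).trans_eq (mul_one m)
  · have hx' : B⁻¹ * x ∈ Set.Icc (-1) 1 := by
      rw [inv_mul_eq_div, Set.mem_Icc, le_div_iff₀ hB, div_le_iff₀ hB, neg_one_mul, one_mul]
      exact hx
    simpa [mul_inv_cancel_left₀ hB.ne', hB.le] using hQ_near _ hx'
  · rw [comp_C_mul_X_coeff, abs_mul, abs_pow, abs_inv, abs_of_pos hB, inv_pow, ← div_eq_mul_inv]
    gcongr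
    exact hQ_coeff j

/-- Chebyshev–Jackson approximation: for `B ≥ 3` and `f : [−B,B] → ℝ` 1-Lipschitz
with `f(0) = 0`, for every positive multiple `m` of 4 there is a polynomial
`P(x) = ∑_{j=0}^m c_j x^j` with `sup_{[−B,B]} |f − P| ≤ 18B/m` and
`|c_j| ≤ 6B · 3^{m−j}`. -/
theorem chebyshev_jackson_approx
    (B : ℝ) (hB : 3 ≤ B) (f : ℝ → ℝ)
    (hf : LipschitzOnWith 1 f (Set.Icc (-B) B)) (hf0 : f 0 = 0)
    (m : ℕ) (hm4 : 4 ∣ m) (hm : 0 < m) :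
    ∃ c : ℕ → ℝ,
      (∀ x ∈ Set.Icc (-B) B,
        |f x - ∑ j ∈ Finset.range (m + 1), c j * x ^ j| ≤ 18 * B / m) ∧
      (∀ j ≤ m, |c j| ≤ 6 * B * 3 ^ (m - j)) := by
  obtain ⟨P, hP_deg, hP_near, hP_coeff⟩ := chebyshev_jackson_approx_general (by linarith) hf hf0 m
  simp only [NNReal.coe_one, one_mul, eval_eq_sum_range' (Nat.lt_succ_of_le hP_deg)]
    at hP_near hP_coeff
  exact ⟨P.coeff, fun x hx => (hP_near x hx).trans (mul_pi_div_add_two_le (by linarith) hm),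
    fun j hj => (hP_coeff j).trans (mul_three_pow_succ_div_pow_le hB hj)⟩
end

section
/- Let η be a probability measure on ℝ^d with finite absolute first moment M_1(η) = ∫‖x‖ dη(x). For θ ∈ ℝ^d, let η_θ denote the pushforward of η under the map x ↦ ⟨θ, x⟩. Then for any θ_1, θ_2 ∈ ℝ^d, W_1(η_{θ_1}, η_{θ_2}) ≤ ‖θ_1 − θ_2‖ · M_1(η). -/
open MeasureTheory

/-- The 1-Wasserstein distance between measures on `ℝ`, in dual form. -/
noncomputable def W1 (μ ν : Measure ℝ) : ℝ :=
  ⨆ f : {f : ℝ → ℝ // LipschitzWith 1 f},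
    |∫ x, (f : ℝ → ℝ) x ∂μ - ∫ x, (f : ℝ → ℝ) x ∂ν|

/-!
The pair `(X, Y)` couples `η.map X` with `η.map Y`: for a 1-Lipschitz `f`, the integrals of `f`
differ by at most `∫ |f ∘ X - f ∘ Y| ∂η ≤ ∫ |X - Y| ∂η`. When `X` and `Y` are linear functionals,
`|X x - Y x|` is at most the dual norm of `X - Y` times `‖x‖`.
-/

open scoped NNReal

section Lipschitz

variable {Ω E F : Type*} [MeasurableSpace Ω] {η : Measure Ω} [IsFiniteMeasure η]
  [NormedAddCommGroup E] [NormedAddCommGroup F] {K : ℝ≥0} {f : E → F} {X Y : Ω → E}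

theorem integrable_comp_of_lipschitzWith (hf : LipschitzWith K f) (hX : Integrable X η) :
    Integrable (fun ω => f (X ω)) η := by
  have hcentered : Integrable (fun ω => f (X ω) - f 0) η :=
    (hX.norm.const_mul (K : ℝ)).mono'
      ((hf.continuous.comp_aestronglyMeasurable hX.aestronglyMeasurable).sub
        aestronglyMeasurable_const)
      (.of_forall fun ω => by simpa only [sub_zero] using hf.norm_sub_le (X ω) 0)
  exact (hcentered.add (integrable_const (f 0))).congr
    (.of_forall fun ω => sub_add_cancel (f (X ω)) (f 0))

theorem norm_integral_map_sub_le_of_lipschitzWith [NormedSpace ℝ F] [MeasurableSpace E]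
    [BorelSpace E] [SecondCountableTopologyEither E F] (hf : LipschitzWith K f)
    (hX : Integrable X η) (hY : Integrable Y η) :
    ‖∫ x, f x ∂η.map X - ∫ x, f x ∂η.map Y‖ ≤ K * ∫ ω, ‖X ω - Y ω‖ ∂η := by
  have hf_meas (μ : Measure E) : AEStronglyMeasurable f μ := hf.continuous.aestronglyMeasurable
  rw [integral_map hX.aemeasurable (hf_meas _), integral_map hY.aemeasurable (hf_meas _),
    ← integral_sub (integrable_comp_of_lipschitzWith hf hX)
      (integrable_comp_of_lipschitzWith hf hY),
    ← integral_const_mul]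
  exact norm_integral_le_of_norm_le ((hX.sub hY).norm.const_mul _)
    (.of_forall fun ω => hf.norm_sub_le (X ω) (Y ω))

end Lipschitz

theorem W1_map_map_le_integral_abs_sub {Ω : Type*} [MeasurableSpace Ω] {η : Measure Ω}
    [IsFiniteMeasure η] {X Y : Ω → ℝ} (hX : Integrable X η) (hY : Integrable Y η) :
    W1 (η.map X) (η.map Y) ≤ ∫ ω, |X ω - Y ω| ∂η := by
  refine Real.iSup_le (fun f => ?_) (integral_nonneg fun _ => abs_nonneg _)
  simpa only [Real.norm_eq_abs, NNReal.coe_one, one_mul] using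
    norm_integral_map_sub_le_of_lipschitzWith f.2 hX hY

theorem projection_lipschitz_general {E : Type*} [SeminormedAddCommGroup E] [NormedSpace ℝ E]
    [MeasurableSpace E] [OpensMeasurableSpace E] (η : Measure E) [IsFiniteMeasure η]
    (hM1 : Integrable (fun x => ‖x‖) η) (L₁ L₂ : StrongDual ℝ E) :
    W1 (η.map L₁) (η.map L₂) ≤ ‖L₁ - L₂‖ * ∫ x, ‖x‖ ∂η := by
  have integrable_dual (L : StrongDual ℝ E) : Integrable L η :=
    (hM1.const_mul ‖L‖).mono' L.continuous.aestronglyMeasurable (.of_forall L.le_opNorm)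
  calc W1 (η.map L₁) (η.map L₂)
    _ ≤ ∫ x, |L₁ x - L₂ x| ∂η :=
        W1_map_map_le_integral_abs_sub (integrable_dual L₁) (integrable_dual L₂)
    _ ≤ ∫ x, ‖L₁ - L₂‖ * ‖x‖ ∂η :=
        integral_mono ((integrable_dual L₁).sub (integrable_dual L₂)).abs (hM1.const_mul _)
          (L₁ - L₂).le_opNorm
    _ = ‖L₁ - L₂‖ * ∫ x, ‖x‖ ∂η := integral_const_mul _ _

/-- Lipschitz continuity of projections: for a probability measure `η` on `ℝ^d`
with finite first moment, `W₁(η_{θ₁}, η_{θ₂}) ≤ ‖θ₁ − θ₂‖ · M₁(η)`. -/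
theorem projection_lipschitz
    {d : ℕ} (η : Measure (EuclideanSpace ℝ (Fin d))) [IsProbabilityMeasure η]
    (hM1 : Integrable (fun x => ‖x‖) η)
    (θ₁ θ₂ : EuclideanSpace ℝ (Fin d)) :
    W1 (η.map (fun x => (inner ℝ θ₁ x : ℝ))) (η.map (fun x => (inner ℝ θ₂ x : ℝ))) ≤
      ‖θ₁ - θ₂‖ * ∫ x, ‖x‖ ∂η := by
  rw [← innerSL_apply_norm (𝕜 := ℝ) (θ₁ - θ₂), map_sub]
  exact projection_lipschitz_general η hM1 (innerSL ℝ θ₁) (innerSL ℝ θ₂)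
end
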